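/- Let n ≥ 1 and q < 0, and let μ be a σ-finite q-homogeneous Borel measure on ℝⁿ. Let A, B ⊆ ℝⁿ be Borel sets with μ(ℝⁿ∖A), μ(ℝⁿ∖B) ∈ (0,∞), and assume B is open and contains the origin. If for some λ ∈ (0,1), μ(ℝⁿ∖(λA+(1−λ)B)) = (λ·μ(ℝⁿ∖A)^q + (1−λ)·μ(ℝⁿ∖B)^q)^{1/q}, then there exists m > 0 such that A and mB coincide up to a set of zero μ-measure, i.e. μ(A∖mB) = μ(mB∖A) = 0. -/

import Mathlib

open MeasureTheory Set Filter
open scoped Pointwise ENNReal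

/-!
A homogeneous measure disintegrates radially: up to a constant, it is the law of `c • x` for `x`
distributed by `μ` and `c` uniform on `(0, 1)`. This reduces `μ` of a complement to the Lebesgue
measure of complements in `(0, 1)`, where the inequality is the one-dimensional Brunn-Minkowski
inequality. Dilating `A`, `B` and their Minkowski combination so that all three complements have
measure one makes the inequality linear in the measures, so that equality forces equality on
almost every segment `(0, 1) • x`. By homogeneity it then holds on `(0, u) • x` for almost every
`u` as well, and differentiating in `u` turns it into the pointwise identity
`a * 1_{Aᶜ} + b * 1_{Bᶜ} = 1_{Cᶜ}` with `a + b = 1`. Since the right-hand side is `0` or `1` and the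
weights are positive, the dilates of `A` and `B` agree almost everywhere.
-/

/-! ### One-dimensional facts -/

lemma volume_add_volume_le_of_isCompact {K L : Set ℝ} (hK : IsCompact K) (hL : IsCompact L)
    (hK₀ : K.Nonempty) (hL₀ : L.Nonempty) : volume K + volume L ≤ volume (K + L) := by
  obtain ⟨a, haK, ha⟩ := hK.exists_isGreatest hK₀
  obtain ⟨b, hbL, hb⟩ := hL.exists_isLeast hL₀
  -- The translates of `K` by `min L` and of `L` by `max K` meet only at `max K + min L`.
  have hinter : (b +ᵥ K) ∩ (a +ᵥ L) ⊆ {a + b} := by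
    rintro _ ⟨⟨x, hx, rfl⟩, y, hy, hxy⟩
    have hxa := ha hx
    have hby := hb hy
    simp only [vadd_eq_add, mem_singleton_iff] at hxy ⊢
    linarith
  have hdisj : AEDisjoint volume (b +ᵥ K) (a +ᵥ L) :=
    measure_mono_null hinter (measure_singleton _)
  calc volume K + volume L
      = volume (b +ᵥ K) + volume (a +ᵥ L) := by rw [measure_vadd, measure_vadd]
    _ = volume ((b +ᵥ K) ∪ (a +ᵥ L)) :=
        (measure_union₀ (hL.vadd a).measurableSet.nullMeasurableSet hdisj).symm
    _ ≤ volume (K + L) := by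
        refine measure_mono (union_subset ?_ ?_)
        · rintro _ ⟨x, hx, rfl⟩
          exact ⟨x, hx, b, hbL, add_comm x b⟩
        · rintro _ ⟨y, hy, rfl⟩
          exact add_mem_add haK hy

lemma volume_add_volume_le {X Y : Set ℝ} (hX : MeasurableSet X) (hY : MeasurableSet Y)
    (hX₀ : X.Nonempty) (hY₀ : Y.Nonempty) : volume X + volume Y ≤ volume (X + Y) := by
  obtain ⟨x, hx⟩ := hX₀
  obtain ⟨y, hy⟩ := hY₀
  rw [hX.measure_eq_iSup_isCompact, hY.measure_eq_iSup_isCompact]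
  simp only [iSup_and']
  refine ENNReal.biSup_add_biSup_le' (p := fun K => K ⊆ X ∧ IsCompact K)
    (q := fun L => L ⊆ Y ∧ IsCompact L) ⟨∅, empty_subset X, isCompact_empty⟩
    ⟨∅, empty_subset Y, isCompact_empty⟩ fun K ⟨hKX, hK⟩ L ⟨hLY, hL⟩ => ?_
  calc volume K + volume L ≤ volume (insert x K) + volume (insert y L) := by
        gcongr <;> exact subset_insert _ _
    _ ≤ volume (insert x K + insert y L) :=
        volume_add_volume_le_of_isCompact (hK.insert x) (hL.insert y)
          (insert_nonempty _ _) (insert_nonempty _ _)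
    _ ≤ volume (X + Y) :=
        measure_mono (add_subset_add (insert_subset hx hKX) (insert_subset hy hLY))

lemma volume_sdiff_le_of_smul_add_smul_subset {I S T C : Set ℝ} (hI : Convex ℝ I)
    (hIfin : volume I ≠ ∞) (hS : MeasurableSet S) (hT : MeasurableSet T) (hC : MeasurableSet C)
    (hS₀ : (I ∩ S).Nonempty) (hT₀ : (I ∩ T).Nonempty) {a b : ℝ} (ha : 0 ≤ a) (hb : 0 ≤ b)
    (hab : a + b = 1) (hSTC : a • S + b • T ⊆ C) :
    volume (I \ C) ≤
      ENNReal.ofReal a * volume (I \ S) + ENNReal.ofReal b * volume (I \ T) := by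
  have hIm : MeasurableSet I := hI.ordConnected.measurableSet
  have hsub : a • (I ∩ S) + b • (I ∩ T) ⊆ I ∩ C := by
    rintro _ ⟨_, ⟨s, hs, rfl⟩, _, ⟨t, ht, rfl⟩, rfl⟩
    exact ⟨hI hs.1 ht.1 ha hb hab,
      hSTC (add_mem_add (smul_mem_smul_set hs.2) (smul_mem_smul_set ht.2))⟩
  have hBM : ENNReal.ofReal a * volume (I ∩ S) + ENNReal.ofReal b * volume (I ∩ T) ≤
      volume (I ∩ C) := by
    have h := volume_add_volume_le ((hIm.inter hS).const_smul₀ a) ((hIm.inter hT).const_smul₀ b)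
      hS₀.smul_set hT₀.smul_set
    simp only [Measure.addHaar_smul_of_nonneg _ ha, Measure.addHaar_smul_of_nonneg _ hb,
      Module.finrank_self, pow_one] at h
    exact h.trans (measure_mono hsub)
  have hICfin : volume (I ∩ C) ≠ ∞ := measure_ne_top_of_subset inter_subset_left hIfin
  refine (ENNReal.add_le_add_iff_left hICfin).1 ?_
  calc volume (I ∩ C) + volume (I \ C)
      = (ENNReal.ofReal a + ENNReal.ofReal b) * volume I := by
        rw [measure_inter_add_sdiff I hC, ← ENNReal.ofReal_add ha hb, hab, ENNReal.ofReal_one,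
          one_mul]
    _ = ENNReal.ofReal a * volume (I ∩ S) + ENNReal.ofReal b * volume (I ∩ T) +
          (ENNReal.ofReal a * volume (I \ S) + ENNReal.ofReal b * volume (I \ T)) := by
        nth_rw 1 [add_mul, ← measure_inter_add_sdiff I hS, ← measure_inter_add_sdiff I hT]
        ring
    _ ≤ volume (I ∩ C) +
          (ENNReal.ofReal a * volume (I \ S) + ENNReal.ofReal b * volume (I \ T)) := by
        gcongr

lemma ae_eq_zero_of_ae_intervalIntegral_eq_zero {G : Type*} [NormedAddCommGroup G]
    [NormedSpace ℝ G] [CompleteSpace G] {f : ℝ → G} {a b : ℝ}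
    (hf : IntervalIntegrable f volume a b)
    (h : ∀ᵐ u ∂volume.restrict (Ioo a b), ∫ c in a..u, f c = 0) :
    ∀ᵐ u ∂volume.restrict (Ioo a b), f u = 0 := by
  have hIoo : Ioo a b ⊆ uIcc a b := Ioo_subset_Icc_self.trans Icc_subset_uIcc
  have hprim : EqOn (fun u => ∫ c in a..u, f c) 0 (Ioo a b) :=
    Measure.eqOn_open_of_ae_eq h isOpen_Ioo
      ((intervalIntegral.continuousOn_primitive_interval' hf left_mem_uIcc).mono hIoo)
      continuousOn_const
  filter_upwards [ae_restrict_of_ae hf.ae_hasDerivAt_integral,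
    ae_restrict_mem measurableSet_Ioo] with u hderiv hu
  refine (hderiv (hIoo hu) a left_mem_uIcc).unique
    ((hasDerivAt_const u (0 : G)).congr_of_eventuallyEq ?_)
  filter_upwards [isOpen_Ioo.mem_nhds hu] with v hv using hprim hv

lemma lintegral_Ioo_zero_one_rpow {r : ℝ} (hr : -1 < r) :
    ∫⁻ c in Ioo (0 : ℝ) 1, ENNReal.ofReal (c ^ r) = ENNReal.ofReal (1 / (r + 1)) := by
  have hfint : IntegrableOn (fun c : ℝ => c ^ r) (Ioo 0 1) :=
    (intervalIntegral.integrableOn_Ioo_rpow_iff one_pos).2 hr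
  rw [← ofReal_integral_eq_lintegral_ofReal hfint
      (ae_restrict_of_forall_mem measurableSet_Ioo fun c hc => Real.rpow_nonneg hc.1.le r),
    ← integral_Ioc_eq_integral_Ioo, ← intervalIntegral.integral_of_le zero_le_one,
    integral_rpow (Or.inl hr), Real.one_rpow, Real.zero_rpow (by linarith), sub_zero]

/-! ### Homogeneous measures and radial averages -/

/-- A measure is homogeneous of degree `p` if dilating a measurable set by `c > 0` multiplies its
measure by `c ^ p`. The `q`-homogeneous measures of the complemented Brunn-Minkowski inequality
are those of degree `1 / q`. -/
def IsHomogeneousMeasure {E : Type*} [SMul ℝ E] [MeasurableSpace E] (μ : Measure E) (p : ℝ) :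
    Prop :=
  ∀ A : Set E, MeasurableSet A → ∀ c : ℝ, 0 < c → μ (c • A) = ENNReal.ofReal (c ^ p) * μ A

section Radial

open ProbabilityTheory

variable {E : Type*} [MeasurableSpace E] [MulAction ℝ E]

namespace IsHomogeneousMeasure

variable {μ : Measure E} {p : ℝ} {A B : Set E}

lemma measure_preimage_smul (hμ : IsHomogeneousMeasure μ p) (hA : MeasurableSet A) {c : ℝ}
    (hc : 0 < c) : μ ((c • ·) ⁻¹' A) = ENNReal.ofReal (c ^ (-p)) * μ A := by
  rw [preimage_smul₀ hc.ne', hμ A hA _ (inv_pos.2 hc), Real.inv_rpow hc.le, Real.rpow_neg hc.le]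

lemma measure_compl_inv_smul_eq_one (hμ : IsHomogeneousMeasure μ p) (hA : MeasurableSet A) {s : ℝ}
    (hs : 0 < s) (h : μ Aᶜ = ENNReal.ofReal (s ^ p)) : μ (s⁻¹ • A)ᶜ = 1 := by
  rw [← preimage_smul₀ hs.ne', ← preimage_compl, hμ.measure_preimage_smul hA.compl hs, h,
    ← ENNReal.ofReal_mul (by positivity), ← Real.rpow_add hs, neg_add_cancel, Real.rpow_zero,
    ENNReal.ofReal_one]

lemma ae_exists_smul_mem (hμ : IsHomogeneousMeasure μ p) (hp : p < 0) (hA : MeasurableSet A)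
    (hAfin : μ Aᶜ ≠ ∞) : ∀ᵐ x ∂μ, ∃ c ∈ Ioo (0 : ℝ) 1, c • x ∈ A := by
  -- The exceptional set lies in `t • Aᶜ` for every `t > 1`, and `μ (t • Aᶜ) → 0` as `t → ∞`.
  have hlim : Tendsto (fun t : ℝ => ENNReal.ofReal (t ^ p) * μ Aᶜ) atTop (nhds 0) := by
    have h := ENNReal.tendsto_ofReal (tendsto_rpow_neg_atTop (neg_pos.2 hp))
    simpa using ENNReal.Tendsto.mul_const h (Or.inr hAfin)
  refine ae_iff.2 (le_antisymm (ge_of_tendsto hlim ?_) zero_le)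
  filter_upwards [eventually_gt_atTop (1 : ℝ)] with t ht
  have ht₀ : 0 < t := one_pos.trans ht
  rw [← hμ _ hA.compl t ht₀]
  refine measure_mono fun x hx => (mem_smul_set_iff_inv_smul_mem₀ ht₀.ne' _ _).2 fun hxA => ?_
  exact hx ⟨t⁻¹, ⟨inv_pos.2 ht₀, inv_lt_one_of_one_lt₀ ht⟩, hxA⟩

lemma smul_set_ae_eq [MeasurableConstSMul ℝ E] (hμ : IsHomogeneousMeasure μ p) {c : ℝ}
    (hc : 0 < c) (h : A =ᵐ[μ] B) : (c • A : Set E) =ᵐ[μ] (c • B : Set E) := by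
  have hquasi : Measure.QuasiMeasurePreserving (c⁻¹ • · : E → E) μ μ := by
    refine ⟨measurable_const_smul _, .mk fun s hs hs₀ => ?_⟩
    rw [Measure.map_apply (measurable_const_smul _) hs,
      hμ.measure_preimage_smul hs (inv_pos.2 hc), hs₀, mul_zero]
  simpa only [preimage_smul₀ (inv_ne_zero hc.ne'), inv_inv] using hquasi.preimage_ae_eq h

end IsHomogeneousMeasure

variable [MeasurableSMul₂ ℝ E]

variable (E) in
/-- The Markov kernel sending `x` to the law of `c • x` for `c` uniform on `(0, 1)`: it averages
over the open segment from the origin to `x`. -/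
noncomputable def segmentKernel : Kernel E E where
  toFun x := (volume.restrict (Ioo (0 : ℝ) 1)).map (· • x)
  measurable' := by
    refine Measure.measurable_of_measurable_coe _ fun s hs => ?_
    simp_rw [Measure.map_apply (measurable_smul_const _) hs]
    exact measurable_measure_prodMk_left (s := (fun z : E × ℝ => z.2 • z.1) ⁻¹' s)
      ((measurable_snd.smul measurable_fst) hs)

lemma segmentKernel_eq_map (x : E) :
    segmentKernel E x = (volume.restrict (Ioo (0 : ℝ) 1)).map (· • x) :=
  rfl

instance : IsMarkovKernel (segmentKernel E) where
  isProbabilityMeasure x := by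
    have : IsProbabilityMeasure (volume.restrict (Ioo (0 : ℝ) 1)) := ⟨by simp⟩
    exact Measure.isProbabilityMeasure_map (measurable_smul_const x).aemeasurable

lemma segmentKernel_apply (x : E) {A : Set E} (hA : MeasurableSet A) :
    segmentKernel E x A = volume (Ioo (0 : ℝ) 1 ∩ (· • x) ⁻¹' A) := by
  rw [segmentKernel_eq_map, Measure.map_apply (measurable_smul_const x) hA,
    Measure.restrict_apply' measurableSet_Ioo, inter_comm]

lemma ae_segmentKernel_iff {P : E → Prop} (hP : MeasurableSet {y | P y}) (x : E) :
    (∀ᵐ y ∂segmentKernel E x, P y) ↔ ∀ᵐ c ∂volume.restrict (Ioo (0 : ℝ) 1), P (c • x) :=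
  ae_map_iff (measurable_smul_const x).aemeasurable hP

lemma integral_segmentKernel_smul {G : Type*} [NormedAddCommGroup G] [NormedSpace ℝ G] {F : E → G}
    (hF : StronglyMeasurable F) (x : E) {u : ℝ} (hu : 0 < u) :
    ∫ y, F y ∂segmentKernel E (u • x) = u⁻¹ • ∫ c in (0 : ℝ)..u, F (c • x) := by
  rw [segmentKernel_eq_map, integral_map (by fun_prop) hF.aestronglyMeasurable,
    ← integral_Ioc_eq_integral_Ioo, ← intervalIntegral.integral_of_le zero_le_one]
  simp_rw [← mul_smul]
  rw [intervalIntegral.integral_comp_mul_right (fun c => F (c • x)) hu.ne', zero_mul, one_mul]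

namespace IsHomogeneousMeasure

variable {μ : Measure E} [SFinite μ] {p : ℝ}

lemma segmentKernel_comp (hμ : IsHomogeneousMeasure μ p) (hp : p < 1) :
    segmentKernel E ∘ₘ μ = ENNReal.ofReal (1 / (1 - p)) • μ := by
  ext A hA
  have hpre : MeasurableSet ((fun z : E × ℝ => z.2 • z.1) ⁻¹' A) :=
    (measurable_snd.smul measurable_fst) hA
  calc (segmentKernel E ∘ₘ μ) A
      = ∫⁻ x, volume.restrict (Ioo (0 : ℝ) 1) ((· • x) ⁻¹' A) ∂μ := by
        rw [Measure.bind_apply hA (segmentKernel E).aemeasurable]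
        exact lintegral_congr fun x => Measure.map_apply (measurable_smul_const x) hA
    _ = ∫⁻ c in Ioo (0 : ℝ) 1, μ ((c • ·) ⁻¹' A) :=
        (Measure.prod_apply hpre).symm.trans (Measure.prod_apply_symm hpre)
    _ = ∫⁻ c in Ioo (0 : ℝ) 1, ENNReal.ofReal (c ^ (-p)) * μ A :=
        setLIntegral_congr_fun measurableSet_Ioo fun c hc => hμ.measure_preimage_smul hA hc.1
    _ = (ENNReal.ofReal (1 / (1 - p)) • μ) A := by
        rw [lintegral_mul_const _ (by fun_prop), lintegral_Ioo_zero_one_rpow (by linarith),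
          neg_add_eq_sub, Measure.smul_apply, smul_eq_mul]

lemma lintegral_segmentKernel (hμ : IsHomogeneousMeasure μ p) (hp : p < 1) {A : Set E}
    (hA : MeasurableSet A) :
    ∫⁻ x, segmentKernel E x A ∂μ = ENNReal.ofReal (1 / (1 - p)) * μ A := by
  rw [← Measure.bind_apply hA (segmentKernel E).aemeasurable, hμ.segmentKernel_comp hp,
    Measure.smul_apply, smul_eq_mul]

lemma ae_ae_segmentKernel_iff (hμ : IsHomogeneousMeasure μ p) (hp : p < 1) {P : E → Prop}
    (hP : MeasurableSet {x | P x}) :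
    (∀ᵐ x ∂μ, ∀ᵐ y ∂segmentKernel E x, P y) ↔ ∀ᵐ x ∂μ, P x := by
  have hK : ENNReal.ofReal (1 / (1 - p)) ≠ 0 := by simpa using hp
  rw [← Measure.ae_comp_iff hP, hμ.segmentKernel_comp hp, Measure.ae_ennreal_smul_measure_eq hK]

theorem ae_eq_zero_of_ae_integral_segmentKernel_eq_zero (hμ : IsHomogeneousMeasure μ p) (hp : p < 1)
    {G : Type*} [NormedAddCommGroup G] [NormedSpace ℝ G] [CompleteSpace G] {F : E → G}
    (hF : StronglyMeasurable F) (hFint : ∀ x, Integrable F (segmentKernel E x))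
    (h : ∀ᵐ x ∂μ, ∫ y, F y ∂segmentKernel E x = 0) : F =ᵐ[μ] 0 := by
  have hzero : MeasurableSet {y | F y = 0} := hF.measurableSet_eq_fun stronglyMeasurable_zero
  have hzero_avg : MeasurableSet {x | ∫ y, F y ∂segmentKernel E x = 0} :=
    hF.integral_kernel.measurableSet_eq_fun stronglyMeasurable_zero
  refine (hμ.ae_ae_segmentKernel_iff hp hzero).1 ?_
  filter_upwards [(hμ.ae_ae_segmentKernel_iff hp hzero_avg).2 h] with x hx
  rw [ae_segmentKernel_iff hzero_avg] at hx
  rw [ae_segmentKernel_iff hzero]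
  have hfint : IntervalIntegrable (fun c : ℝ => F (c • x)) volume 0 1 :=
    (intervalIntegrable_iff_integrableOn_Ioo_of_le zero_le_one).2
      ((integrable_map_measure hF.aestronglyMeasurable
        (by fun_prop)).1 (hFint x))
  refine ae_eq_zero_of_ae_intervalIntegral_eq_zero hfint ?_
  filter_upwards [hx, ae_restrict_mem measurableSet_Ioo] with u hu hu₀
  rw [integral_segmentKernel_smul hF x hu₀.1] at hu
  exact (smul_eq_zero.1 hu).resolve_left (inv_ne_zero hu₀.1.ne')

end IsHomogeneousMeasure

end Radial

/-! ### Equality in the complemented Brunn-Minkowski inequality -/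

namespace IsHomogeneousMeasure

open ProbabilityTheory

variable {E : Type*} [AddCommGroup E] [Module ℝ E] [MeasurableSpace E] [MeasurableSMul₂ ℝ E]
  {μ : Measure E} {p : ℝ} {A B C : Set E} {a b : ℝ}

lemma ae_segmentKernel_compl_le (hμ : IsHomogeneousMeasure μ p) (hp : p < 0)
    (hA : MeasurableSet A) (hB : MeasurableSet B) (hC : MeasurableSet C)
    (hAfin : μ Aᶜ ≠ ∞) (hBfin : μ Bᶜ ≠ ∞) (ha : 0 ≤ a) (hb : 0 ≤ b) (hab : a + b = 1)
    (hABC : a • A + b • B ⊆ C) :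
    ∀ᵐ x ∂μ, segmentKernel E x Cᶜ ≤
      ENNReal.ofReal a * segmentKernel E x Aᶜ + ENNReal.ofReal b * segmentKernel E x Bᶜ := by
  filter_upwards [hμ.ae_exists_smul_mem hp hA hAfin, hμ.ae_exists_smul_mem hp hB hBfin]
    with x ⟨s, hs, hsA⟩ ⟨t, ht, htB⟩
  have hslice : a • (· • x : ℝ → E) ⁻¹' A + b • (· • x) ⁻¹' B ⊆ (· • x) ⁻¹' C := by
    rintro _ ⟨_, ⟨s, hs, rfl⟩, _, ⟨t, ht, rfl⟩, rfl⟩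
    refine hABC ⟨a • s • x, smul_mem_smul_set hs, b • t • x, smul_mem_smul_set ht, ?_⟩
    simp only [add_smul, smul_assoc]
  simp only [segmentKernel_apply x hA.compl, segmentKernel_apply x hB.compl,
    segmentKernel_apply x hC.compl, preimage_compl, ← sdiff_eq]
  exact volume_sdiff_le_of_smul_add_smul_subset (convex_Ioo 0 1) (by simp)
    (measurable_smul_const x hA) (measurable_smul_const x hB) (measurable_smul_const x hC)
    ⟨s, hs, hsA⟩ ⟨t, ht, htB⟩ ha hb hab hslice

variable [SFinite μ]

lemma ae_segmentKernel_compl_eq (hμ : IsHomogeneousMeasure μ p) (hp : p < 0)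
    (hA : MeasurableSet A) (hB : MeasurableSet B) (hC : MeasurableSet C)
    (hAfin : μ Aᶜ ≠ ∞) (hBfin : μ Bᶜ ≠ ∞) (ha : 0 ≤ a) (hb : 0 ≤ b) (hab : a + b = 1)
    (hABC : a • A + b • B ⊆ C)
    (heq : μ Cᶜ = ENNReal.ofReal a * μ Aᶜ + ENNReal.ofReal b * μ Bᶜ) :
    ∀ᵐ x ∂μ, segmentKernel E x Cᶜ =
      ENNReal.ofReal a * segmentKernel E x Aᶜ + ENNReal.ofReal b * segmentKernel E x Bᶜ := by
  have hp₁ : p < 1 := hp.trans one_pos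
  have hCfin : μ Cᶜ ≠ ∞ := by rw [heq]; finiteness
  have hmA := (segmentKernel E).measurable_coe hA.compl
  have hmB := (segmentKernel E).measurable_coe hB.compl
  refine ae_eq_of_ae_le_of_lintegral_le
    (hμ.ae_segmentKernel_compl_le hp hA hB hC hAfin hBfin ha hb hab hABC) ?_
    (by fun_prop) (le_of_eq ?_)
  · rw [hμ.lintegral_segmentKernel hp₁ hC.compl]
    finiteness
  · rw [lintegral_add_left (by fun_prop), lintegral_const_mul _ hmA, lintegral_const_mul _ hmB,
      hμ.lintegral_segmentKernel hp₁ hA.compl, hμ.lintegral_segmentKernel hp₁ hB.compl,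
      hμ.lintegral_segmentKernel hp₁ hC.compl, heq]
    ring

lemma ae_indicator_compl_eq (hμ : IsHomogeneousMeasure μ p) (hp : p < 0)
    (hA : MeasurableSet A) (hB : MeasurableSet B) (hC : MeasurableSet C)
    (hAfin : μ Aᶜ ≠ ∞) (hBfin : μ Bᶜ ≠ ∞) (ha : 0 ≤ a) (hb : 0 ≤ b) (hab : a + b = 1)
    (hABC : a • A + b • B ⊆ C)
    (heq : μ Cᶜ = ENNReal.ofReal a * μ Aᶜ + ENNReal.ofReal b * μ Bᶜ) :
    ∀ᵐ x ∂μ, a * Aᶜ.indicator 1 x + b * Bᶜ.indicator 1 x = Cᶜ.indicator (1 : E → ℝ) x := by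
  have hmeas : StronglyMeasurable fun x =>
      a * Aᶜ.indicator 1 x + b * Bᶜ.indicator 1 x - Cᶜ.indicator (1 : E → ℝ) x :=
    (((stronglyMeasurable_one.indicator hA.compl).const_mul a).add
      ((stronglyMeasurable_one.indicator hB.compl).const_mul b)).sub
      (stronglyMeasurable_one.indicator hC.compl)
  have hindint (x : E) {N : Set E} (hN : MeasurableSet N) :
      Integrable (N.indicator (1 : E → ℝ)) (segmentKernel E x) :=
    (integrable_const 1).indicator hN
  have hintA (x : E) := (hindint x hA.compl).const_mul a
  have hintB (x : E) := (hindint x hB.compl).const_mul b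
  have hintAB (x : E) : Integrable (fun y => a * Aᶜ.indicator 1 y + b * Bᶜ.indicator 1 y)
      (segmentKernel E x) :=
    (hintA x).add (hintB x)
  have havg : ∀ᵐ x ∂μ, ∫ y, (a * Aᶜ.indicator 1 y + b * Bᶜ.indicator 1 y -
      Cᶜ.indicator (1 : E → ℝ) y) ∂segmentKernel E x = 0 := by
    filter_upwards [hμ.ae_segmentKernel_compl_eq hp hA hB hC hAfin hBfin ha hb hab hABC heq]
      with x hx
    have hreal := congrArg ENNReal.toReal hx
    rw [ENNReal.toReal_add (by finiteness) (by finiteness), ENNReal.toReal_mul, ENNReal.toReal_mul,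
      ENNReal.toReal_ofReal ha, ENNReal.toReal_ofReal hb] at hreal
    rw [integral_sub (hintAB x) (hindint x hC.compl), integral_add (hintA x) (hintB x),
      integral_const_mul, integral_const_mul, integral_indicator_one hA.compl,
      integral_indicator_one hB.compl, integral_indicator_one hC.compl]
    exact sub_eq_zero.2 hreal.symm
  filter_upwards [hμ.ae_eq_zero_of_ae_integral_segmentKernel_eq_zero (hp.trans one_pos) hmeas
    (fun x => (hintAB x).sub (hindint x hC.compl)) havg] with x hx using sub_eq_zero.1 hx

theorem ae_eq_of_measure_compl_eq (hμ : IsHomogeneousMeasure μ p) (hp : p < 0)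
    (hA : MeasurableSet A) (hB : MeasurableSet B) (hC : MeasurableSet C)
    (hAfin : μ Aᶜ ≠ ∞) (hBfin : μ Bᶜ ≠ ∞) (ha : 0 < a) (hb : 0 < b) (hab : a + b = 1)
    (hABC : a • A + b • B ⊆ C)
    (heq : μ Cᶜ = ENNReal.ofReal a * μ Aᶜ + ENNReal.ofReal b * μ Bᶜ) :
    A =ᵐ[μ] B := by
  filter_upwards [hμ.ae_indicator_compl_eq hp hA hB hC hAfin hBfin ha.le hb.le hab hABC heq]
    with x hx
  refine propext (?_ : x ∈ A ↔ x ∈ B)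
  by_cases hxA : x ∈ A <;> by_cases hxB : x ∈ B <;> by_cases hxC : x ∈ C <;>
    simp [hxA, hxB, hxC] at hx ⊢ <;> linarith

theorem inv_smul_ae_eq_inv_smul (hμ : IsHomogeneousMeasure μ p) (hp : p < 0)
    (hA : MeasurableSet A) (hB : MeasurableSet B) (hC : MeasurableSet C)
    (ha : 0 < a) (hb : 0 < b) (hABC : a • A + b • B ⊆ C) {s t : ℝ} (hs : 0 < s) (ht : 0 < t)
    (hAs : μ Aᶜ = ENNReal.ofReal (s ^ p)) (hBt : μ Bᶜ = ENNReal.ofReal (t ^ p))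
    (hCst : μ Cᶜ = ENNReal.ofReal ((a * s + b * t) ^ p)) :
    (s⁻¹ • A : Set E) =ᵐ[μ] (t⁻¹ • B : Set E) := by
  set r := a * s + b * t
  have hr₀ : 0 < r := by positivity
  have hA₁ := hμ.measure_compl_inv_smul_eq_one hA hs hAs
  have hB₁ := hμ.measure_compl_inv_smul_eq_one hB ht hBt
  have hC₁ := hμ.measure_compl_inv_smul_eq_one hC hr₀ hCst
  have hsum : a * s / r + b * t / r = 1 := by rw [← add_div, div_self hr₀.ne']
  have hsub : (a * s / r) • s⁻¹ • A + (b * t / r) • t⁻¹ • B ⊆ r⁻¹ • C := by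
    have h₁ : a * s / r * s⁻¹ = r⁻¹ * a := by field_simp
    have h₂ : b * t / r * t⁻¹ = r⁻¹ * b := by field_simp
    rw [smul_smul, smul_smul, h₁, h₂, mul_smul, mul_smul, ← smul_add]
    exact smul_set_mono hABC
  refine hμ.ae_eq_of_measure_compl_eq hp (hA.const_smul_of_ne_zero (inv_ne_zero hs.ne'))
    (hB.const_smul_of_ne_zero (inv_ne_zero ht.ne')) (hC.const_smul_of_ne_zero (inv_ne_zero hr₀.ne'))
    (by simp [hA₁]) (by simp [hB₁]) (by positivity) (by positivity) hsum hsub ?_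
  rw [hA₁, hB₁, hC₁, mul_one, mul_one, ← ENNReal.ofReal_add (by positivity) (by positivity), hsum,
    ENNReal.ofReal_one]

end IsHomogeneousMeasure

lemma exists_pos_rpow_eq_ofReal {v : ℝ≥0∞} (hv₀ : v ≠ 0) (hv : v ≠ ∞) {q : ℝ} (hq : q ≠ 0) :
    ∃ s : ℝ, 0 < s ∧ v ^ q = ENNReal.ofReal s ∧ v = ENNReal.ofReal (s ^ (1 / q)) := by
  have hvq : v ^ q = ENNReal.ofReal (v ^ q).toReal :=
    (ENNReal.ofReal_toReal (ENNReal.rpow_ne_top_of_ne_zero hv₀ hv)).symm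
  have hs : 0 < (v ^ q).toReal := by
    rw [← ENNReal.toReal_rpow]
    exact Real.rpow_pos_of_pos (ENNReal.toReal_pos hv₀ hv) q
  refine ⟨(v ^ q).toReal, hs, hvq, ?_⟩
  rw [← ENNReal.ofReal_rpow_of_pos hs, ← hvq, ← ENNReal.rpow_mul, mul_one_div_cancel hq,
    ENNReal.rpow_one]

theorem stmt13_general {E : Type*} [AddCommGroup E] [Module ℝ E] [MeasurableSpace E]
    [MeasurableSMul₂ ℝ E] {q : ℝ} (hq : q < 0) {μ : Measure E} [SFinite μ]
    (hμ : IsHomogeneousMeasure μ (1 / q)) {A B : Set E} (hA : MeasurableSet A)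
    (hB : MeasurableSet B) (hAc0 : 0 < μ Aᶜ) (hAcfin : μ Aᶜ < ⊤) (hBc0 : 0 < μ Bᶜ)
    (hBcfin : μ Bᶜ < ⊤) {a b : ℝ} (ha : 0 < a) (hb : 0 < b)
    (hAB : NullMeasurableSet (a • A + b • B) μ)
    (heq : μ (a • A + b • B)ᶜ =
      (ENNReal.ofReal a * μ Aᶜ ^ q + ENNReal.ofReal b * μ Bᶜ ^ q) ^ (1 / q)) :
    ∃ m : ℝ, 0 < m ∧ A =ᵐ[μ] (m • B : Set E) := by
  obtain ⟨s, hs, hAq, hAs⟩ := exists_pos_rpow_eq_ofReal hAc0.ne' hAcfin.ne hq.ne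
  obtain ⟨t, ht, hBq, hBt⟩ := exists_pos_rpow_eq_ofReal hBc0.ne' hBcfin.ne hq.ne
  obtain ⟨C, hABC, hC, hCAB⟩ := hAB.exists_measurable_superset_ae_eq
  have hCst : μ Cᶜ = ENNReal.ofReal ((a * s + b * t) ^ (1 / q)) := by
    rw [measure_congr hCAB.compl, heq, hAq, hBq, ← ENNReal.ofReal_mul ha.le,
      ← ENNReal.ofReal_mul hb.le, ← ENNReal.ofReal_add (by positivity) (by positivity),
      ENNReal.ofReal_rpow_of_pos (by positivity)]
  have hscaled : (s⁻¹ • A : Set E) =ᵐ[μ] (t⁻¹ • B : Set E) :=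
    hμ.inv_smul_ae_eq_inv_smul (one_div_neg.2 hq) hA hB hC ha hb hABC hs ht hAs hBt hCst
  refine ⟨s / t, div_pos hs ht, ?_⟩
  simpa only [smul_smul, mul_inv_cancel₀ hs.ne', one_smul, ← div_eq_mul_inv] using
    hμ.smul_set_ae_eq hs hscaled

/-- equality case in the `q`-complemented Brunn--Minkowski inequality for a
σ-finite `q`-homogeneous measure, `q < 0`: if `B` is open and contains the origin and
equality holds, then `A` and `mB` coincide up to zero `μ`-measure for some `m > 0`. -/
theorem stmt13 (n : ℕ) (hn : 1 ≤ n) (q : ℝ) (hq : q < 0)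
    (μ : Measure (Fin n → ℝ)) (hσ : SigmaFinite μ)
    (hhom : ∀ A : Set (Fin n → ℝ), MeasurableSet A → ∀ c : ℝ, 0 < c →
      μ (c • A) = ENNReal.ofReal (c ^ (1 / q)) * μ A)
    (A B : Set (Fin n → ℝ)) (hA : MeasurableSet A)
    (hBopen : IsOpen B) (h0B : (0 : Fin n → ℝ) ∈ B)
    (hAc0 : 0 < μ Aᶜ) (hAcfin : μ Aᶜ < ⊤) (hBc0 : 0 < μ Bᶜ) (hBcfin : μ Bᶜ < ⊤)
    (lam : ℝ) (hlam : lam ∈ Set.Ioo (0 : ℝ) 1)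
    (heq : μ ((lam • A + (1 - lam) • B)ᶜ) =
      (ENNReal.ofReal lam * μ Aᶜ ^ q + ENNReal.ofReal (1 - lam) * μ Bᶜ ^ q) ^ (1 / q)) :
    ∃ m : ℝ, 0 < m ∧ μ (A \ m • B) = 0 ∧ μ (m • B \ A) = 0 := by
  obtain ⟨m, hm, h⟩ := stmt13_general hq hhom hA hBopen.measurableSet hAc0 hAcfin hBc0 hBcfin
    hlam.1 (sub_pos.2 hlam.2)
    (hBopen.smul₀ (sub_pos.2 hlam.2).ne').add_left.measurableSet.nullMeasurableSet heq
  exact ⟨m, hm, ae_eq_set.1 h⟩
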